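/- For every integer ω ≥ 8, there exists a graph story S = (G, ω, k, τ) such that G is a series-parallel graph and S is not realizable for any k < ⌊ω/2⌋ − 3 (while S is realizable for k = ⌊ω/2⌋ − 3). For ω = 8 this is witnessed by an 11-vertex series-parallel graph that is a parallel composition of four components — three of which are each a series of an edge with a triangle, and one of which is a path of length four — with τ given by the indices of the vertices. -/

import Mathlib

open Set

namespace GraphStories

/-- Points of the plane. -/
abbrev Pt : Type := ℝ × ℝ

/-- The vertex set of the window graph `G_i` (time `i` is 1-indexed, vertex
`v_j : Fin n` sits at position `j+1` in the ordering `τ`):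
`v_j ∈ G_i` iff `max{1, i-ω+1} ≤ j+1 ≤ i`. -/
def window (n ω i : ℕ) : Set (Fin n) := {j | j.val + 1 ≤ i ∧ i ≤ j.val + ω}

/-- All edges of `G` are visible: `|i - j| < ω` for every edge `(v_i, v_j)`. -/
def Visible (n ω : ℕ) (G : SimpleGraph (Fin n)) : Prop :=
  ∀ u v : Fin n, G.Adj u v → u.val < v.val + ω ∧ v.val < u.val + ω

/-- The data of a drawing: a position for every vertex, and a parametrized curve
for every (ordered) pair of vertices (only the data attached to the vertices and
edges of the relevant subgraph is meaningful). -/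
structure RawDrawing (n : ℕ) where
  pos : Fin n → Pt
  curve : Fin n → Fin n → ℝ → Pt

/-- `γ` (restricted to `[0,1]`) is a Jordan arc from `a` to `b`. -/
def IsArcFrom (γ : ℝ → Pt) (a b : Pt) : Prop :=
  ContinuousOn γ (Icc 0 1) ∧ InjOn γ (Icc 0 1) ∧ γ 0 = a ∧ γ 1 = b

/-- The set of points of an arc. -/
def arcBody (γ : ℝ → Pt) : Set Pt := γ '' Icc (0 : ℝ) 1

/-- The set of interior points of an arc (endpoints removed). -/
def arcInterior (γ : ℝ → Pt) : Set Pt := γ '' Ioo (0 : ℝ) 1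

/-- `D` is a planar drawing of the subgraph of `G` induced by `S`, with the
vertices mapped to (distinct) points of `P` and the edges drawn as Jordan arcs
which pairwise do not intersect except at common endpoints. -/
structure IsPlanarDrawingOn (n : ℕ) (G : SimpleGraph (Fin n)) (S : Set (Fin n))
    (P : Set Pt) (D : RawDrawing n) : Prop where
  pos_mem : ∀ v ∈ S, D.pos v ∈ P
  pos_inj : InjOn D.pos S
  curve_symm : ∀ u v : Fin n, D.curve v u = fun t => D.curve u v (1 - t)
  arc : ∀ u ∈ S, ∀ v ∈ S, G.Adj u v → IsArcFrom (D.curve u v) (D.pos u) (D.pos v)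
  vertex_off_arc : ∀ u ∈ S, ∀ v ∈ S, G.Adj u v → ∀ w ∈ S,
      D.pos w ∉ arcInterior (D.curve u v)
  no_cross : ∀ u ∈ S, ∀ v ∈ S, ∀ x ∈ S, ∀ y ∈ S, G.Adj u v → G.Adj x y →
      s(u, v) ≠ s(x, y) →
      arcInterior (D.curve u v) ∩ arcInterior (D.curve x y) = ∅

/-- `D` is a planar drawing of the subgraph of `G` induced by `S` (anywhere in
the plane). -/
def IsPlanarDrawing (n : ℕ) (G : SimpleGraph (Fin n)) (S : Set (Fin n))
    (D : RawDrawing n) : Prop :=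
  IsPlanarDrawingOn n G S univ D

/-- A realization of the graph story `(G, ω, k, τ)` on the point set `P`:
a sequence `Γ_1, …, Γ_n` of planar drawings of the window graphs `G_1, …, G_n`
on `P` (property R1) such that consecutive drawings restrict identically
(vertex positions and edge arcs) to the common subgraph `G_{i-1} ∩ G_i`
(property R2). -/
structure Realization (n ω : ℕ) (G : SimpleGraph (Fin n)) (P : Set Pt) where
  Γ : ℕ → RawDrawing n
  planar : ∀ i, 1 ≤ i → i ≤ n → IsPlanarDrawingOn n G (window n ω i) P (Γ i)
  pos_eq : ∀ i, 2 ≤ i → i ≤ n → ∀ v ∈ window n ω (i - 1) ∩ window n ω i,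
      (Γ i).pos v = (Γ (i - 1)).pos v
  curve_eq : ∀ i, 2 ≤ i → i ≤ n →
      ∀ u ∈ window n ω (i - 1) ∩ window n ω i,
      ∀ v ∈ window n ω (i - 1) ∩ window n ω i,
      G.Adj u v → (Γ i).curve u v = (Γ (i - 1)).curve u v

/-- The story `(G, ω, k, τ)` admits a realization on the point set `P`. -/
def RealizableOn (n ω : ℕ) (G : SimpleGraph (Fin n)) (P : Set Pt) : Prop :=
  Nonempty (Realization n ω G P)

/-- The story `(G, ω, k, τ)` is realizable: it admits a realization on some set
of `ω + k` points. -/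
def Realizable (n ω k : ℕ) (G : SimpleGraph (Fin n)) : Prop :=
  ∃ P : Finset Pt, P.card = ω + k ∧ RealizableOn n ω G ↑P

/-- `G` has a `K₄` minor: there are four pairwise disjoint connected branch
sets, pairwise joined by an edge of `G`. -/
def HasK4Minor {V : Type*} (G : SimpleGraph V) : Prop :=
  ∃ B : Fin 4 → Set V,
    (∀ i, (SimpleGraph.induce (B i) G).Connected) ∧
    (Pairwise fun i j => Disjoint (B i) (B j)) ∧
    ∀ i j, i ≠ j → ∃ u ∈ B i, ∃ v ∈ B j, G.Adj u v

/-- A series-parallel graph is a graph with no `K₄` minor. -/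
def SeriesParallel {V : Type*} (G : SimpleGraph V) : Prop := ¬ HasK4Minor G

theorem exists_log_lift {A : Type*} [TopologicalSpace A] [SimplyConnectedSpace A]
    [LocallyPathConnectedSpace A] (f : A → ℂ) (hf : Continuous f) (h0 : ∀ a, f a ≠ 0) (a₀ : A) :
    ∃ F : A → ℂ, Continuous F ∧ ∀ a, Complex.exp (F a) = f a := by
  obtain ⟨F, ⟨-, hF⟩, -⟩ := Complex.isCoveringMapOn_exp.existsUnique_continuousMap_lifts
    (⟨f, hf⟩ : C(A, ℂ)) (a₀ := a₀) (e₀ := Complex.log (f a₀))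
    (by simpa using Complex.exp_log (h0 a₀)) (fun a => h0 a)
  exact ⟨F, F.continuous, fun a => congr_fun hF a⟩

theorem lift_incr (L M : ℝ → ℂ) (hL : Continuous L) (hM : Continuous M) (c : ℂ)
    (h : ∀ t, Complex.exp (L t) = c * Complex.exp (M t)) :
    L 1 - L 0 = M 1 - M 0 := by
  have hc : ∀ t, Complex.exp (L t - M t) = c := by
    intro t
    rw [Complex.exp_sub, h t, mul_div_assoc, div_self (Complex.exp_ne_zero _), mul_one]
  have hc0 : c ≠ 0 := by rw [← hc 0]; exact Complex.exp_ne_zero _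
  have hu := (Complex.isCoveringMapOn_exp.existsUnique_continuousMap_lifts
    (ContinuousMap.const ℝ c) (a₀ := (0:ℝ)) (e₀ := L 0 - M 0)
    (by simpa using hc 0) (fun a => hc0)).unique
    (y₁ := ⟨fun t => L t - M t, hL.sub hM⟩) (y₂ := ContinuousMap.const ℝ (L 0 - M 0))
    ⟨rfl, by ext t; exact hc t⟩ ⟨rfl, by ext t; exact hc 0⟩
  have := DFunLike.congr_fun hu (1 : ℝ)
  simp only [ContinuousMap.coe_mk, ContinuousMap.const_apply] at this
  linear_combination this

theorem square_rel (e f : ℝ → ℂ) (he : Continuous e) (hf : Continuous f)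
    (hne : ∀ s t, e s ≠ f t) (L1 L2 M0 M1 : ℝ → ℂ)
    (cL1 : Continuous L1) (cL2 : Continuous L2) (cM0 : Continuous M0) (cM1 : Continuous M1)
    (hL1 : ∀ s, Complex.exp (L1 s) = e s - f 0) (hL2 : ∀ s, Complex.exp (L2 s) = e s - f 1)
    (hM0 : ∀ s, Complex.exp (M0 s) = f s - e 0) (hM1 : ∀ s, Complex.exp (M1 s) = f s - e 1) :
    (L2 1 - L2 0) - (L1 1 - L1 0) = (M1 1 - M1 0) - (M0 1 - M0 0) := by
  obtain ⟨F, cF, hF⟩ := exists_log_lift (fun p : ℝ × ℝ => e p.1 - f p.2) (by fun_prop)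
    (fun p => sub_ne_zero.2 (hne _ _)) (0, 0)
  have e1 := lift_incr L1 (fun s => F (s, 0)) cL1 (by fun_prop) 1 (by intro t; simp [hL1, hF])
  have e2 := lift_incr L2 (fun s => F (s, 1)) cL2 (by fun_prop) 1 (by intro t; simp [hL2, hF])
  have e3 := lift_incr M0 (fun s => F (0, s)) cM0 (by fun_prop) (-1) (by intro t; simp [hM0, hF])
  have e4 := lift_incr M1 (fun s => F (1, s)) cM1 (by fun_prop) (-1) (by intro t; simp [hM1, hF])
  linear_combination e2 - e1 - e4 + e3

theorem k33_complex (a b : Fin 3 → ℂ) (γ : Fin 3 → Fin 3 → ℝ → ℂ)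
    (hc : ∀ i j, Continuous (γ i j)) (h0 : ∀ i j, γ i j 0 = a i) (h1 : ∀ i j, γ i j 1 = b j)
    (hd : ∀ i j k l, i ≠ k → j ≠ l → ∀ s t, γ i j s ≠ γ k l t) : False := by
  -- lifts of `γ i j - b l` and `γ i j - a k`
  have hB : ∀ i j l, ∃ F : ℝ → ℂ, j ≠ l → Continuous F ∧ ∀ s, Complex.exp (F s) = γ i j s - b l := by
    intro i j l
    by_cases hjl : j = l
    · exact ⟨0, fun h => absurd hjl h⟩
    · obtain ⟨k, hk⟩ : ∃ k, i ≠ k := by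
        rcases exists_ne i with ⟨k, hk⟩; exact ⟨k, hk.symm⟩
      obtain ⟨F, hF⟩ := exists_log_lift (fun s => γ i j s - b l) ((hc i j).sub continuous_const)
        (fun s => sub_ne_zero.2 (by rw [← h1 k l]; exact hd i j k l hk hjl _ _)) 0
      exact ⟨F, fun _ => hF⟩
  have hA : ∀ i j k, ∃ F : ℝ → ℂ, i ≠ k → Continuous F ∧ ∀ s, Complex.exp (F s) = γ i j s - a k := by
    intro i j k
    by_cases hik : i = k
    · exact ⟨0, fun h => absurd hik h⟩
    · obtain ⟨l, hl⟩ : ∃ l, j ≠ l := by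
        rcases exists_ne j with ⟨k, hk⟩; exact ⟨k, hk.symm⟩
      obtain ⟨F, hF⟩ := exists_log_lift (fun s => γ i j s - a k) ((hc i j).sub continuous_const)
        (fun s => sub_ne_zero.2 (by rw [← h0 k l]; exact hd i j k l hik hl _ _)) 0
      exact ⟨F, fun _ => hF⟩
  choose LB hLB using hB
  choose LA hLA using hA
  have nAA : ∀ i k, i ≠ k → a i - a k ≠ 0 := fun i k h => by
    rw [← h0 i 0, ← h0 k 1]; exact sub_ne_zero.2 (hd _ _ _ _ h (by decide) _ _)
  have nBB : ∀ j l, j ≠ l → b j - b l ≠ 0 := fun j l h => by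
    rw [← h1 0 j, ← h1 1 l]; exact sub_ne_zero.2 (hd _ _ _ _ (by decide) h _ _)
  have nAB : ∀ i l, a i - b l ≠ 0 := fun i l => by
    obtain ⟨k, hk⟩ := exists_ne i
    obtain ⟨j, hj⟩ := exists_ne l
    rw [← h0 i j, ← h1 k l]; exact sub_ne_zero.2 (hd _ _ _ _ hk.symm hj _ _)
  let α : Fin 3 → Fin 3 → ℂ := fun i k => if i < k then Complex.log (a i - a k) else
    Complex.log (a k - a i) + Real.pi * Complex.I
  let β : Fin 3 → Fin 3 → ℂ := fun i k => if i < k then Complex.log (b i - b k) else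
    Complex.log (b k - b i) + Real.pi * Complex.I
  have hα : ∀ i k, i ≠ k → Complex.exp (α i k) = a i - a k := by
    intro i k h
    by_cases hlt : i < k
    · simp [α, hlt, Complex.exp_log (nAA i k h)]
    · simp [α, hlt, Complex.exp_add, Complex.exp_log (nAA k i h.symm)]
  have hβ : ∀ i k, i ≠ k → Complex.exp (β i k) = b i - b k := by
    intro i k h
    by_cases hlt : i < k
    · simp [β, hlt, Complex.exp_log (nBB i k h)]
    · simp [β, hlt, Complex.exp_add, Complex.exp_log (nBB k i h.symm)]
  let m : Fin 3 → Fin 3 → ℂ := fun i l => Complex.log (a i - b l)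
  have hm : ∀ i l, Complex.exp (m i l) = a i - b l := fun i l => Complex.exp_log (nAB i l)
  have hN : ∀ i j l, ∃ N : ℤ, j ≠ l → LB i j l 1 - LB i j l 0
      = β j l - m i l + N * (2 * Real.pi * Complex.I) := by
    intro i j l
    by_cases hjl : j = l
    · exact ⟨0, fun h => absurd hjl h⟩
    have : Complex.exp (LB i j l 1 - LB i j l 0) = Complex.exp (β j l - m i l) := by
      rw [Complex.exp_sub, Complex.exp_sub, (hLB i j l hjl).2, (hLB i j l hjl).2, hβ j l hjl, hm,
        h0, h1]
    obtain ⟨N, hN⟩ := Complex.exp_eq_exp_iff_exists_int.1 this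
    exact ⟨N, fun _ => hN⟩
  have hM : ∀ i j k, ∃ M : ℤ, i ≠ k → LA i j k 1 - LA i j k 0
      = m k j + Real.pi * Complex.I - α i k + M * (2 * Real.pi * Complex.I) := by
    intro i j k
    by_cases hik : i = k
    · exact ⟨0, fun h => absurd hik h⟩
    have : Complex.exp (LA i j k 1 - LA i j k 0)
        = Complex.exp (m k j + Real.pi * Complex.I - α i k) := by
      rw [Complex.exp_sub, Complex.exp_sub, (hLA i j k hik).2, (hLA i j k hik).2, hα i k hik,
        Complex.exp_add, hm, h0, h1, Complex.exp_pi_mul_I]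
      ring
    obtain ⟨N, hN⟩ := Complex.exp_eq_exp_iff_exists_int.1 this
    exact ⟨N, fun _ => hN⟩
  choose N hN using hN
  choose M hM using hM
  have key : ∀ i j k l, i < k → j ≠ l →
      N i j l - M i j k - N k l j + M k l i = if j < l then 1 else 0 := by
    intro i j k l hik hjl
    have hs := square_rel (γ i j) (γ k l) (hc _ _) (hc _ _) (hd _ _ _ _ hik.ne hjl)
      (LA i j k) (LB i j l) (LA k l i) (LB k l j)
      (hLA _ _ _ hik.ne).1 (hLB _ _ _ hjl).1 (hLA _ _ _ hik.ne').1 (hLB _ _ _ hjl.symm).1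
      (by rw [h0]; exact (hLA _ _ _ hik.ne).2) (by rw [h1]; exact (hLB _ _ _ hjl).2)
      (by rw [h0]; exact (hLA _ _ _ hik.ne').2) (by rw [h1]; exact (hLB _ _ _ hjl.symm).2)
    rw [hN i j l hjl, hM i j k hik.ne, hN k l j hjl.symm, hM k l i hik.ne'] at hs
    have e1 : α i k = α k i - Real.pi * Complex.I := by
      simp [α, hik, hik.not_gt]
    rw [e1] at hs
    have hpi : (2 * Real.pi * Complex.I) ≠ 0 := Complex.two_pi_I_ne_zero
    by_cases hlt : j < l
    · have e2 : β j l = β l j - Real.pi * Complex.I := by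
        simp [β, hlt, hlt.not_gt]
      rw [e2] at hs
      have : ((N i j l - M i j k - N k l j + M k l i : ℤ) : ℂ) = 1 := by
        push_cast
        apply mul_right_cancel₀ hpi
        linear_combination hs
      rw [if_pos hlt]; exact_mod_cast this
    · have hgt : l < j := lt_of_le_of_ne (not_lt.1 hlt) hjl.symm
      have e2 : β l j = β j l - Real.pi * Complex.I := by
        simp [β, hgt, hlt]
      rw [e2] at hs
      have : ((N i j l - M i j k - N k l j + M k l i : ℤ) : ℂ) = 0 := by
        push_cast
        apply mul_right_cancel₀ hpi
        linear_combination hs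
      rw [if_neg hlt]; exact_mod_cast this
  have q : ∀ j l : Fin 3, j < l → ∀ i k : Fin 3, i < k → 
      N i j l - M i j k - N k l j + M k l i = 1 ∧ N i l j - M i l k - N k j l + M k j i = 0 := by
    intro j l hjl i k hik
    have h1 := key i j k l hik hjl.ne
    have h2 := key i l k j hik hjl.ne'
    rw [if_pos hjl] at h1
    rw [if_neg hjl.not_gt] at h2
    exact ⟨h1, h2⟩
  have q1 := fun i k h => q 0 1 (by decide) i k h
  have q2 := fun i k h => q 0 2 (by decide) i k h
  have q3 := fun i k h => q 1 2 (by decide) i k h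
  have a1 := q1 0 1 (by decide)
  have a2 := q1 0 2 (by decide)
  have a3 := q1 1 2 (by decide)
  have b1 := q2 0 1 (by decide)
  have b2 := q2 0 2 (by decide)
  have b3 := q2 1 2 (by decide)
  have c1 := q3 0 1 (by decide)
  have c2 := q3 0 2 (by decide)
  have c3 := q3 1 2 (by decide)
  clear q q1 q2 q3 key hN hM
  omega

theorem k33_nonplanar (a b : Fin 3 → ℝ × ℝ) (E : Fin 3 → Fin 3 → Set (ℝ × ℝ))
    (hj : ∀ i j, JoinedIn (E i j) (a i) (b j))
    (hd : ∀ i j k l, i ≠ k → j ≠ l → Disjoint (E i j) (E k l)) : False := by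
  let φ : ℝ × ℝ → ℂ := fun p => Complex.equivRealProdCLM.symm p
  have hφ : Continuous φ := Complex.equivRealProdCLM.symm.continuous
  have hinj : Function.Injective φ := Complex.equivRealProdCLM.symm.injective
  refine k33_complex (fun i => φ (a i)) (fun j => φ (b j))
    (fun i j t => φ ((hj i j).somePath.extend t)) (fun i j => hφ.comp (by fun_prop))
    (fun i j => by simp) (fun i j => by simp) ?_
  intro i j k l hik hjl s t h
  have h' := hinj h
  have m1 : ∀ i j t, (hj i j).somePath.extend t ∈ E i j := fun i j t => by
    obtain ⟨u, hu⟩ : (hj i j).somePath.extend t ∈ range (hj i j).somePath := by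
      rw [← Path.extend_range]; exact mem_range_self t
    rw [← hu]; exact (hj i j).somePath_mem u
  exact Set.disjoint_left.1 (hd i j k l hik hjl) (m1 i j s) (h' ▸ m1 k l t)
/-- Directed edges of the graph used in the proof (on indices). The vertices are
`y_i = i`, `s = r`, `t = r + 1`, `x_i = r + 2 + i` and `a_j = ω + j`. -/
def Ed (r ω u v : ℕ) : Prop :=
  ((u = r ∨ u = r + 1) ∧ r + 2 ≤ v ∧ v < 2 * r + 2) ∨ (u < r ∧ v = u + r + 2) ∨
    (ω ≤ u ∧ v = u + 1)

/-- The graph of the story. -/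
def GG (r ω : ℕ) : SimpleGraph (Fin (ω + r)) where
  Adj u v := Ed r ω u v ∨ Ed r ω v u
  symm := ⟨fun _ _ h => h.symm⟩
  loopless := ⟨fun u h => by rcases h with h | h <;> (unfold Ed at h; omega)⟩

theorem conn_closed {V : Type*} {G : SimpleGraph V} {B : Set V}
    (hB : (SimpleGraph.induce B G).Connected) (p : V → Prop)
    (hp : ∀ u ∈ B, ∀ v ∈ B, G.Adj u v → p u → p v) {u v : V} (hu : u ∈ B) (hv : v ∈ B)
    (h : p u) : p v := by
  obtain ⟨w⟩ := hB.preconnected ⟨u, hu⟩ ⟨v, hv⟩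
  have : ∀ (x y : B) (w : (SimpleGraph.induce B G).Walk x y), p x → p y := by
    intro x y w
    induction w with
    | nil => exact id
    | cons hadj _ ih => exact fun hx => ih (hp _ (Subtype.coe_prop _) _ (Subtype.coe_prop _) hadj hx)
  exact this _ _ w h

theorem GG_visible (r ω : ℕ) (hr : 3 ≤ r) (h1 : 2 * r + 2 ≤ ω) :
    Visible (ω + r) ω (GG r ω) := by
  intro u v h
  have hu := u.2
  have hv := v.2
  rcases h with h | h <;> (unfold Ed at h; omega)

theorem four_props {a b c d : Prop} (t1 : a → b → c → False) (t2 : a → b → d → False)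
    (t3 : a → c → d → False) (t4 : b → c → d → False) (b1 : a ∨ b) (b2 : a ∨ c) (b3 : a ∨ d)
    (b4 : b ∨ c) (b5 : b ∨ d) (b6 : c ∨ d) : False := by
  by_cases ha : a <;> by_cases hb : b <;> by_cases hc : c <;> by_cases hd : d <;> simp_all

theorem GG_sp (r ω : ℕ) (h1 : 2 * r + 2 ≤ ω) :
    SeriesParallel (GG r ω) := by
  rintro ⟨B, hc, hd, ha⟩
  have dj : ∀ i j, i ≠ j → ∀ u v : Fin (ω + r), u ∈ B i → v ∈ B j → u.val ≠ v.val := by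
    intro i j hij u v hu hv h
    rw [Fin.ext h] at hu
    exact Set.disjoint_left.1 (hd hij) hu hv
  -- no branch set may be adjacent to another one through an edge of the path
  have path : ∀ i j, i ≠ j → ∀ u ∈ B i, ∀ v ∈ B j, ω ≤ u.val → v.val = u.val + 1 → False := by
    intro i j hij u hu v hv huω huv
    obtain ⟨k, hki, hkj⟩ : ∃ k : Fin 4, k ≠ i ∧ k ≠ j := by
      revert i j; intro i j _ _ _ ; clear * - ; revert i j; decide
    have up : ∀ k, k ≠ j → ∀ w ∈ B k, v.val < w.val → ∀ w' ∈ B k, v.val < w'.val := by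
      intro k hk w hw hvw w' hw'
      refine conn_closed (hc k) (fun z => v.val < z.val) ?_ hw hw' hvw
      intro a ha' b hb hab hav
      have := dj k j hk b v hb hv
      rcases hab with h | h <;> (unfold Ed at h; omega)
    have lo : ∀ k, k ≠ i → ∀ w ∈ B k, ω ≤ w.val → w.val < u.val → ∀ w' ∈ B k,
        ω ≤ w'.val ∧ w'.val < u.val := by
      intro k hk w hw hw1 hvw w' hw'
      refine conn_closed (hc k) (fun z => ω ≤ z.val ∧ z.val < u.val) ?_ hw hw' ⟨hw1, hvw⟩
      intro a ha' b hb hab hav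
      have := dj k i hk b u hb hu
      rcases hab with h | h <;> (unfold Ed at h; omega)
    have upi : ∀ w ∈ B i, ω ≤ w.val ∧ w.val < v.val := by
      intro w' hw'
      refine conn_closed (hc i) (fun z => ω ≤ z.val ∧ z.val < v.val) ?_ hu hw' ⟨huω, by omega⟩
      intro a ha' b hb hab hav
      have := dj i j hij b v hb hv
      rcases hab with h | h <;> (unfold Ed at h; omega)
    have loj : ∀ w ∈ B j, u.val < w.val := by
      intro w' hw'
      refine conn_closed (hc j) (fun z => u.val < z.val) ?_ hv hw' (by omega)
      intro a ha' b hb hab hav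
      have := dj j i hij.symm b u hb hu
      rcases hab with h | h <;> (unfold Ed at h; omega)
    obtain ⟨p, hp, q, hq, hpq⟩ := ha i k hki.symm
    obtain ⟨p', hp', q', hq', hpq'⟩ := ha j k hkj.symm
    have n1 := dj k i hki q u hq hu
    have n2 := dj k j hkj q v hq hv
    have n3 := upi p hp
    have n4 := loj p' hp'
    have qω : ω ≤ q.val := by rcases hpq with h | h <;> (unfold Ed at h; omega)
    rcases lt_or_ge q.val u.val with hlt | hge
    · have := lo k hki q hq qω hlt q' hq'
      rcases hpq' with h | h <;> (unfold Ed at h; omega)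
    · have := up k hkj q hq (by omega) q hq
      rcases hpq with h | h <;> (unfold Ed at h; omega)
  have xy : ∀ i j, i ≠ j → ∀ u ∈ B i, ∀ v ∈ B j, u.val < r → v.val = u.val + r + 2 → False := by
    intro i j hij u hu v hv hur huv
    obtain ⟨k, hki, hkj⟩ : ∃ k : Fin 4, k ≠ i ∧ k ≠ j := by
      clear * - ; revert i j; decide
    have all : ∀ w ∈ B i, w.val = u.val := by
      intro w' hw'
      refine conn_closed (hc i) (fun z => z.val = u.val) ?_ hu hw' rfl
      intro a ha' b hb hab hav
      have := dj i j hij b v hb hv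
      rcases hab with h | h <;> (unfold Ed at h; omega)
    obtain ⟨p, hp, q, hq, hpq⟩ := ha i k hki.symm
    have n1 := all p hp
    have n2 := dj k j hkj q v hq hv
    rcases hpq with h | h <;> (unfold Ed at h; omega)
  -- two branch sets avoid `s` and `t`
  have two : ∃ i j : Fin 4, i ≠ j ∧ ∀ u : Fin (ω + r), (u ∈ B i ∨ u ∈ B j) →
      u.val ≠ r ∧ u.val ≠ r + 1 := by
    by_contra hcon
    push Not at hcon
    let bad : Fin 4 → Prop := fun i => ∃ u ∈ B i, u.val = r ∨ u.val = r + 1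
    have hb : ∀ i j, i ≠ j → bad i ∨ bad j := by
      intro i j hij
      obtain ⟨u, hu, h⟩ := hcon i j hij
      have h' : u.val = r ∨ u.val = r + 1 := by omega
      rcases hu with hu | hu
      · exact Or.inl ⟨u, hu, h'⟩
      · exact Or.inr ⟨u, hu, h'⟩
    have three : ∀ i j k, i ≠ j → j ≠ k → i ≠ k → bad i → bad j → bad k → False := by
      rintro i j k hij hjk hik ⟨u, hu, h1⟩ ⟨v, hv, h2⟩ ⟨w, hw, h3⟩
      have := dj i j hij u v hu hv
      have := dj j k hjk v w hv hw
      have := dj i k hik u w hu hw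
      omega
    have t1 := three 0 1 2 (by decide) (by decide) (by decide)
    have t2 := three 0 1 3 (by decide) (by decide) (by decide)
    have t3 := three 0 2 3 (by decide) (by decide) (by decide)
    have t4 := three 1 2 3 (by decide) (by decide) (by decide)
    have b1 := hb 0 1 (by decide)
    have b2 := hb 0 2 (by decide)
    have b3 := hb 0 3 (by decide)
    have b4 := hb 1 2 (by decide)
    have b5 := hb 1 3 (by decide)
    have b6 := hb 2 3 (by decide)
    exact four_props t1 t2 t3 t4 b1 b2 b3 b4 b5 b6
  obtain ⟨i, j, hij, hav⟩ := two
  obtain ⟨u, hu, v, hv, huv⟩ := ha i j hij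
  have au := hav u (Or.inl hu)
  have av := hav v (Or.inr hv)
  rcases huv with h | h
  · rcases h with h | h | h
    · omega
    · exact xy i j hij u hu v hv h.1 h.2
    · exact path i j hij u hu v hv h.1 h.2
  · rcases h with h | h | h
    · omega
    · exact xy j i hij.symm v hv u hu h.1 h.2
    · exact path j i hij.symm v hv u hu h.1 h.2

theorem arcBody_sub {γ : ℝ → Pt} {a b : Pt} (h : IsArcFrom γ a b) {p : Pt} (hp : p ∈ arcBody γ) :
    p ∈ arcInterior γ ∨ p = a ∨ p = b := by
  obtain ⟨t, ht, rfl⟩ := hp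
  rcases eq_or_lt_of_le ht.1 with h0 | h0
  · right; left; rw [← h0]; exact h.2.2.1
  rcases eq_or_lt_of_le ht.2 with h2 | h2
  · right; right; rw [h2]; exact h.2.2.2
  · left; exact ⟨t, ⟨h0, h2⟩, rfl⟩

theorem arcs_disjoint {n : ℕ} {G : SimpleGraph (Fin n)} {S : Set (Fin n)} {P : Set Pt}
    {D : RawDrawing n} (hD : IsPlanarDrawingOn n G S P D) {u v x y : Fin n}
    (hu : u ∈ S) (hv : v ∈ S) (hx : x ∈ S) (hy : y ∈ S) (huv : G.Adj u v) (hxy : G.Adj x y)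
    (h1 : u ≠ x) (h2 : u ≠ y) (h3 : v ≠ x) (h4 : v ≠ y) :
    Disjoint (arcBody (D.curve u v)) (arcBody (D.curve x y)) := by
  rw [Set.disjoint_left]
  intro p hp hq
  rcases arcBody_sub (hD.arc u hu v hv huv) hp with hp | hp | hp <;>
  rcases arcBody_sub (hD.arc x hx y hy hxy) hq with hq | hq | hq
  · have := hD.no_cross u hu v hv x hx y hy huv hxy (by
      intro h; rcases Sym2.eq_iff.1 h with h | h
      · exact h1 h.1
      · exact h2 h.1)
    have h' : p ∈ arcInterior (D.curve u v) ∩ arcInterior (D.curve x y) := ⟨hp, hq⟩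
    rw [this] at h'
    exact h'
  · exact hD.vertex_off_arc u hu v hv huv x hx (hq ▸ hp)
  · exact hD.vertex_off_arc u hu v hv huv y hy (hq ▸ hp)
  · exact hD.vertex_off_arc x hx y hy hxy u hu (hp ▸ hq)
  · exact h1 (hD.pos_inj hu hx (hp.symm.trans hq))
  · exact h2 (hD.pos_inj hu hy (hp.symm.trans hq))
  · exact hD.vertex_off_arc x hx y hy hxy v hv (hp ▸ hq)
  · exact h3 (hD.pos_inj hv hx (hp.symm.trans hq))
  · exact h4 (hD.pos_inj hv hy (hp.symm.trans hq))

theorem joined_of_arc {γ : ℝ → Pt} {a b : Pt} (h : IsArcFrom γ a b) :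
    JoinedIn (arcBody γ) a b :=
  JoinedIn.ofLine h.1 h.2.2.1 h.2.2.2 subset_rfl

/-- The index `m` as a vertex. -/
abbrev vx (ω r m : ℕ) (h : m < ω + r) : Fin (ω + r) := ⟨m, h⟩

theorem no_three (r ω : ℕ) (hr : 3 ≤ r) (h1 : 2 * r + 2 ≤ ω) (P : Set Pt)
    (D0 D1 : RawDrawing (ω + r))
    (p0 : IsPlanarDrawingOn (ω + r) (GG r ω) (window (ω + r) ω ω) P D0)
    (p1 : IsPlanarDrawingOn (ω + r) (GG r ω) (window (ω + r) ω (ω + r)) P D1)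
    (hpos : ∀ v : Fin (ω + r), r ≤ v.val → v.val < ω → D1.pos v = D0.pos v)
    (hcur : ∀ u v : Fin (ω + r), r ≤ u.val → u.val < ω → r ≤ v.val → v.val < ω →
      (GG r ω).Adj u v → D1.curve u v = D0.curve u v)
    (u j : Fin 3 → Fin r) (hu : Function.Injective u)
    (hcoin : ∀ q, D0.pos (Fin.castAdd r ⟨u q, by omega⟩) = D1.pos (Fin.natAdd ω (j q))) : False := by
  let S : Fin (ω + r) := vx ω r r (by omega)
  let T : Fin (ω + r) := vx ω r (r + 1) (by omega)
  let Y : Fin 3 → Fin (ω + r) := fun q => vx ω r (u q) (by omega)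
  let X : Fin 3 → Fin (ω + r) := fun q => vx ω r (u q + r + 2) (by omega)
  have hne : ∀ q q', q ≠ q' → (u q).val ≠ (u q').val := fun q q' h h' => h (hu (Fin.ext h'))
  have w0 : ∀ v : Fin (ω + r), v.val < ω → v ∈ window (ω + r) ω ω := fun v hv =>
    ⟨by omega, by omega⟩
  have w1 : ∀ v : Fin (ω + r), r ≤ v.val → v ∈ window (ω + r) ω (ω + r) := fun v hv =>
    ⟨by omega, by omega⟩
  have eS : ∀ q, (GG r ω).Adj S (X q) := fun q => Or.inl (Or.inl ⟨Or.inl rfl, by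
    have := (u q).2; simp only [X]; omega⟩)
  have eT : ∀ q, (GG r ω).Adj T (X q) := fun q => Or.inl (Or.inl ⟨Or.inr rfl, by
    have := (u q).2; simp only [X]; omega⟩)
  have eY : ∀ q, (GG r ω).Adj (Y q) (X q) := fun q => Or.inl (Or.inr (Or.inl ⟨(u q).2, rfl⟩))
  let AA : ℕ → Fin (ω + r) := fun m => if h : m < r then vx ω r (ω + m) (by omega) else S
  have hAA : ∀ m, m < r → (AA m).val = ω + m := fun m h => by simp [AA, h]
  have eA : ∀ m, m + 1 < r → (GG r ω).Adj (AA m) (AA (m + 1)) := fun m h => by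
    refine Or.inl (Or.inr (Or.inr ?_))
    rw [hAA m (by omega), hAA (m + 1) h]
    omega
  let core : Set Pt := ⋃ m : Fin (r - 1), arcBody (D1.curve (AA m) (AA (m + 1)))
  have jcore : ∀ m, m < r → JoinedIn core (D1.pos (AA 0)) (D1.pos (AA m)) := by
    intro m
    have step : ∀ m, m + 1 < r → JoinedIn core (D1.pos (AA m)) (D1.pos (AA (m + 1))) := by
      intro m h
      have a1 := hAA m (by omega)
      have a2 := hAA (m + 1) (by omega)
      refine (joined_of_arc (p1.arc _ (w1 _ (by omega)) _ (w1 _ (by omega)) (eA m h))).mono ?_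
      exact Set.subset_iUnion (fun m : Fin (r - 1) => arcBody (D1.curve (AA m) (AA (m + 1))))
        ⟨m, by omega⟩
    induction m with
    | zero => intro _; exact JoinedIn.refl (step 0 (by omega)).source_mem
    | succ m ih => intro h; exact (ih (by omega)).trans (step m h)
  have coin : ∀ q, D0.pos (Y q) = D1.pos (AA (j q)) := fun q => by
    have e1 : AA (j q) = Fin.natAdd ω (j q) := Fin.ext (by rw [hAA _ (j q).2]; rfl)
    rw [e1, ← hcoin q]; rfl
  have xr : ∀ q, r ≤ (X q).val ∧ (X q).val < ω := fun q => by
    have := (u q).2; simp only [X]; omega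
  have sv : S.val = r := rfl
  have tv : T.val = r + 1 := rfl
  have yv : ∀ q, (Y q).val = (u q).val := fun q => rfl
  have xv : ∀ q, (X q).val = (u q).val + r + 2 := fun q => rfl
  have corediss : ∀ Z : Fin (ω + r), r ≤ Z.val → Z.val < ω → ∀ q, (GG r ω).Adj Z (X q) →
      Disjoint core (arcBody (D1.curve Z (X q))) := by
    intro Z hZ hZ' q hadj
    simp only [core]
    rw [Set.disjoint_iUnion_left]
    intro m
    have hm := m.2
    have a1 := hAA m (by omega)
    have a2 := hAA (m + 1) (by omega)
    have a3 := xr q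
    refine arcs_disjoint p1 (w1 _ (by omega)) (w1 _ (by omega)) (w1 _ (by omega))
      (w1 _ (by omega)) (eA m (by omega)) hadj ?_ ?_ ?_ ?_ <;>
    (intro h; have := congrArg Fin.val h; omega)
  have ydiss : ∀ Z : Fin (ω + r), (Z = S ∨ Z = T) → ∀ q q', q ≠ q' → (GG r ω).Adj Z (X q) →
      Disjoint (arcBody (D0.curve (Y q') (X q'))) (arcBody (D1.curve Z (X q))) := by
    intro Z hZ q q' hq hadj
    have zv : Z.val = r ∨ Z.val = r + 1 := by
      rcases hZ with rfl | rfl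
      · exact Or.inl rfl
      · exact Or.inr rfl
    have a3 := xr q
    have a4 := xr q'
    have a5 := yv q'
    have a6 := (u q').2
    have a7 := xv q
    have a8 := xv q'
    have a9 := hne q q' hq
    rw [hcur Z (X q) (by omega) (by omega) (by omega) (by omega) hadj]
    refine arcs_disjoint p0 (w0 _ (by omega)) (w0 _ (by omega)) (w0 _ (by omega))
      (w0 _ (by omega)) (eY q') hadj ?_ ?_ ?_ ?_ <;>
    (intro h; have := congrArg Fin.val h; omega)
  let E : Fin 3 → Fin 3 → Set Pt := ![fun q => arcBody (D1.curve S (X q)),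
    fun q => arcBody (D1.curve T (X q)), fun q => core ∪ arcBody (D0.curve (Y q) (X q))]
  have d01 : ∀ q q', q ≠ q' → Disjoint (E 0 q) (E 1 q') := by
    intro q q' hq
    have a3 := xr q
    have a4 := xr q'
    have a7 := xv q
    have a8 := xv q'
    have a9 := hne q q' hq
    refine arcs_disjoint p1 (w1 _ (by omega)) (w1 _ (by omega)) (w1 _ (by omega))
      (w1 _ (by omega)) (eS q) (eT q') ?_ ?_ ?_ ?_ <;>
    (intro h; have := congrArg Fin.val h; omega)
  have d20 : ∀ q q', q ≠ q' → Disjoint (E 2 q) (E 0 q') := by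
    intro q q' hq
    exact Set.disjoint_union_left.2 ⟨corediss S (by omega) (by omega) q' (eS q'),
      ydiss S (Or.inl rfl) q' q hq.symm (eS q')⟩
  have d21 : ∀ q q', q ≠ q' → Disjoint (E 2 q) (E 1 q') := by
    intro q q' hq
    exact Set.disjoint_union_left.2 ⟨corediss T (by omega) (by omega) q' (eT q'),
      ydiss T (Or.inr rfl) q' q hq.symm (eT q')⟩
  refine k33_nonplanar ![D1.pos S, D1.pos T, D1.pos (AA 0)] (fun q => D1.pos (X q)) E ?_ ?_
  · intro i q
    have a3 := xr q
    have a5 := yv q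
    have a6 := (u q).2
    fin_cases i
    · exact joined_of_arc (p1.arc _ (w1 _ (by omega)) _ (w1 _ (by omega)) (eS q))
    · exact joined_of_arc (p1.arc _ (w1 _ (by omega)) _ (w1 _ (by omega)) (eT q))
    · refine ((jcore (j q) (j q).2).mono Set.subset_union_left).trans ?_
      rw [← coin q, hpos (X q) (by omega) (by omega)]
      exact (joined_of_arc (p0.arc _ (w0 _ (by omega)) _ (w0 _ (by omega)) (eY q))).mono
        Set.subset_union_right
  · intro i q k q' hik hq
    fin_cases i <;> fin_cases k
    · exact absurd rfl hik
    · exact d01 q q' hq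
    · exact (d20 q' q hq.symm).symm
    · exact (d01 q' q hq.symm).symm
    · exact absurd rfl hik
    · exact (d21 q' q hq.symm).symm
    · exact d20 q q' hq
    · exact d21 q q' hq
    · exact absurd rfl hik

theorem GG_lower (r ω k : ℕ) (hr : 3 ≤ r) (h1 : 2 * r + 2 ≤ ω) (hk : k < r - 2) :
    ¬ Realizable (ω + r) ω k (GG r ω) := by
  rintro ⟨P, hP, ⟨R⟩⟩
  have hpers : ∀ d, d ≤ r → (∀ v : Fin (ω + r), r ≤ v.val → v.val < ω →
        (R.Γ (ω + d)).pos v = (R.Γ ω).pos v) ∧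
      (∀ u v : Fin (ω + r), r ≤ u.val → u.val < ω → r ≤ v.val → v.val < ω →
      (GG r ω).Adj u v → (R.Γ (ω + d)).curve u v = (R.Γ ω).curve u v) := by
    intro d
    induction d with
    | zero => intro _; exact ⟨fun _ _ _ => rfl, fun _ _ _ _ _ _ _ => rfl⟩
    | succ d ih =>
      intro hd
      obtain ⟨i1, i2⟩ := ih (by omega)
      have hw : ∀ v : Fin (ω + r), r ≤ v.val → v.val < ω →
          v ∈ window (ω + r) ω (ω + (d + 1) - 1) ∩ window (ω + r) ω (ω + (d + 1)) := by
        intro v a b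
        exact ⟨⟨by omega, by omega⟩, ⟨by omega, by omega⟩⟩
      refine ⟨fun v a b => ?_, fun u v a b a' b' h => ?_⟩
      · rw [R.pos_eq (ω + (d + 1)) (by omega) (by omega) v (hw v a b), ← i1 v a b]; rfl
      · rw [R.curve_eq (ω + (d + 1)) (by omega) (by omega) u (hw u a b) v (hw v a' b') h,
          ← i2 u v a b a' b' h]; rfl
  obtain ⟨hpos, hcur⟩ := hpers r le_rfl
  have p0 := R.planar ω (by omega) (by omega)
  have p1 := R.planar (ω + r) (by omega) (by omega)
  have w0 : ∀ v : Fin (ω + r), v.val < ω → v ∈ window (ω + r) ω ω := fun v hv =>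
    ⟨by omega, by omega⟩
  have w1 : ∀ v : Fin (ω + r), r ≤ v.val → v ∈ window (ω + r) ω (ω + r) := fun v hv =>
    ⟨by omega, by omega⟩
  let W0 : Finset Pt := Finset.univ.image (fun i : Fin ω => (R.Γ ω).pos (Fin.castAdd r i))
  let Af : Finset Pt := Finset.univ.image (fun j : Fin r => (R.Γ (ω + r)).pos (Fin.natAdd ω j))
  have cW : W0.card = ω := by
    rw [Finset.card_image_of_injective, Finset.card_univ, Fintype.card_fin]
    intro a b h
    exact Fin.castAdd_injective ω r (p0.pos_inj (w0 _ a.2) (w0 _ b.2) h)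
  have cA : Af.card = r := by
    rw [Finset.card_image_of_injective, Finset.card_univ, Fintype.card_fin]
    intro a b h
    exact Fin.natAdd_injective r ω (p1.pos_inj (w1 _ (by simp; omega)) (w1 _ (by simp; omega)) h)
  have sub : W0 ∪ Af ⊆ P := by
    intro p hp
    rcases Finset.mem_union.1 hp with hp | hp
    · obtain ⟨i, -, rfl⟩ := Finset.mem_image.1 hp
      exact p0.pos_mem _ (w0 _ i.2)
    · obtain ⟨i, -, rfl⟩ := Finset.mem_image.1 hp
      exact p1.pos_mem _ (w1 _ (by simp; omega))
  have cu := Finset.card_union_add_card_inter W0 Af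
  have cs := Finset.card_le_card sub
  have h3 : 2 < (W0 ∩ Af).card := by omega
  obtain ⟨x, hx, y, hy, z, hz, hxy, hxz, hyz⟩ := Finset.two_lt_card.1 h3
  have ex : ∀ p ∈ W0 ∩ Af, ∃ (u : Fin r) (j : Fin r),
      (R.Γ ω).pos (Fin.castAdd r ⟨u, by omega⟩) = p ∧ (R.Γ (ω + r)).pos (Fin.natAdd ω j) = p := by
    intro p hp
    obtain ⟨hp1, hp2⟩ := Finset.mem_inter.1 hp
    obtain ⟨i, -, hi⟩ := Finset.mem_image.1 hp1
    obtain ⟨j, -, hj⟩ := Finset.mem_image.1 hp2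
    rcases lt_or_ge i.val r with hlt | hge
    · exact ⟨⟨i, hlt⟩, j, hi, hj⟩
    · exfalso
      have e1 := hpos (Fin.castAdd r i) hge i.2
      have e2 := p1.pos_inj (w1 (Fin.castAdd r i) hge) (w1 (Fin.natAdd ω j) (by simp; omega))
        (by rw [e1]; exact hi.trans hj.symm)
      have := congrArg Fin.val e2
      simp at this
      omega
  let pt : Fin 3 → Pt := ![x, y, z]
  have hpt : ∀ q, pt q ∈ W0 ∩ Af := by
    intro q; fin_cases q
    · exact hx
    · exact hy
    · exact hz
  have ptinj : Function.Injective pt := by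
    intro q q' h
    fin_cases q <;> fin_cases q'
    · rfl
    · exact absurd h hxy
    · exact absurd h hxz
    · exact absurd h.symm hxy
    · rfl
    · exact absurd h hyz
    · exact absurd h.symm hxz
    · exact absurd h.symm hyz
    · rfl
  choose u j hu hj using fun q => ex (pt q) (hpt q)
  refine no_three r ω hr h1 P (R.Γ ω) (R.Γ (ω + r)) p0 p1 hpos hcur u j ?_
    (fun q => (hu q).trans (hj q).symm)
  intro q q' h
  apply ptinj
  rw [← hu q, ← hu q', h]

/-- Abscissa of the vertices. -/
def hx (r ω v : ℕ) : ℤ :=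
  if v = r ∨ v = r + 1 then 0
  else if ω ≤ v then v - ω
  else if v < r then (if v = 0 then 0 else if v = 1 then r - 1 else r + 2 * v + 1)
  else if v < 2 * r + 2 then
    (if v = r + 2 then -1 else if v = r + 3 then r else 2 * v - r - 4)
  else -2

/-- Ordinate of the vertices. -/
def hy (r v : ℕ) : ℤ := if v = r then 1 else if v = r + 1 then -1 else 0

/-- The straight-line drawing. -/
noncomputable def DD (r ω : ℕ) : RawDrawing (ω + r) where
  pos v := ((hx r ω v : ℝ), (hy r v : ℝ))
  curve u v t := ((1 - t) * (hx r ω u : ℝ) + t * (hx r ω v : ℝ),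
    (1 - t) * (hy r u : ℝ) + t * (hy r v : ℝ))

theorem DD_symm (r ω : ℕ) (u v : Fin (ω + r)) :
    (DD r ω).curve v u = fun t => (DD r ω).curve u v (1 - t) := by
  funext t
  simp only [DD]
  ext <;> simp only <;> ring

theorem arcInterior_rev (r ω : ℕ) (u v : Fin (ω + r)) :
    arcInterior ((DD r ω).curve v u) = arcInterior ((DD r ω).curve u v) := by
  rw [DD_symm r ω u v]
  ext p
  constructor
  · rintro ⟨t, ht, rfl⟩
    exact ⟨1 - t, ⟨by linarith [ht.2], by linarith [ht.1]⟩, rfl⟩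
  · rintro ⟨t, ht, rfl⟩
    exact ⟨1 - t, ⟨by linarith [ht.2], by linarith [ht.1]⟩, by simp⟩

/-- Left end of the unit interval occupied by the edge on the axis starting at `u`. -/
def le (r ω u : ℕ) : ℤ :=
  if ω ≤ u then u - ω else if u = 0 then -1 else if u = 1 then r - 1 else r + 2 * u

theorem ed_cases (r ω : ℕ) (hr : 3 ≤ r) (h1 : 2 * r + 2 ≤ ω) (u v : ℕ) (hv : v < ω + r)
    (h : Ed r ω u v) :
    ((u = r ∨ u = r + 1) ∧ r + 2 ≤ v ∧ v < 2 * r + 2 ∧ hx r ω u = 0 ∧ hy r v = 0) ∨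
    ((u < r ∨ ω ≤ u) ∧ hy r u = 0 ∧ hy r v = 0 ∧
      ((hx r ω u = le r ω u ∧ hx r ω v = le r ω u + 1) ∨
       (hx r ω v = le r ω u ∧ hx r ω u = le r ω u + 1))) := by
  rcases h with h | h | h
  · left
    refine ⟨h.1, h.2.1, h.2.2, ?_, ?_⟩
    · simp [hx, h.1]
    · simp only [hy]; split_ifs <;> omega
  · right
    obtain ⟨ha, rfl⟩ := h
    refine ⟨Or.inl ha, ?_, ?_, ?_⟩
    · simp only [hy]; split_ifs <;> omega
    · simp only [hy]; split_ifs <;> omega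
    · simp only [hx, le]; split_ifs <;> omega
  · right
    obtain ⟨ha, rfl⟩ := h
    refine ⟨Or.inr ha, ?_, ?_, ?_⟩
    · simp only [hy]; split_ifs <;> omega
    · simp only [hy]; split_ifs <;> omega
    · simp only [hx, le]; split_ifs <;> omega

theorem hx_X_inj (r ω v v' : ℕ) (h1 : 2 * r + 2 ≤ ω) (a : r + 2 ≤ v) (b : v < 2 * r + 2)
    (a' : r + 2 ≤ v') (b' : v' < 2 * r + 2) (h : hx r ω v = hx r ω v') : v = v' := by
  simp only [hx] at h
  split_ifs at h <;> omega

theorem le_inj (r ω : ℕ) (hr : 3 ≤ r) (h1 : 2 * r + 2 ≤ ω) (u v u' v' : ℕ)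
    (hv : v < ω + r) (hv' : v' < ω + r)
    (hu : u < r ∨ ω ≤ u) (hu' : u' < r ∨ ω ≤ u') (h : Ed r ω u v) (h' : Ed r ω u' v')
    (e : le r ω u = le r ω u') : u = u' ∧ v = v' := by
  unfold Ed at h h'
  simp only [le] at e
  split_ifs at e <;> omega

/-- Points in the interior of an edge. -/
theorem int_cases (r ω : ℕ) (hr : 3 ≤ r) (h1 : 2 * r + 2 ≤ ω) (u v : Fin (ω + r))
    (h : Ed r ω u v) (p : Pt) (hp : p ∈ arcInterior ((DD r ω).curve u v)) :
    (u.val = r ∧ r + 2 ≤ v.val ∧ v.val < 2 * r + 2 ∧ 0 < p.2 ∧ p.2 < 1 ∧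
      p.1 = (1 - p.2) * hx r ω v) ∨
    (u.val = r + 1 ∧ r + 2 ≤ v.val ∧ v.val < 2 * r + 2 ∧ p.2 < 0 ∧ -1 < p.2 ∧
      p.1 = (1 + p.2) * hx r ω v) ∨
    ((u.val < r ∨ ω ≤ u.val) ∧ p.2 = 0 ∧ (le r ω u : ℝ) < p.1 ∧ p.1 < (le r ω u : ℝ) + 1) := by
  obtain ⟨t, ⟨t0, t1⟩, rfl⟩ := hp
  simp only [DD]
  rcases ed_cases r ω hr h1 u v v.2 h with ⟨hu, a, b, c, d⟩ | ⟨hu, a, b, c⟩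
  · rcases hu with hu | hu
    · left
      have e : hy r u = 1 := by simp [hy, hu]
      rw [c, d, e]
      push_cast
      refine ⟨hu, a, b, by linarith, by linarith, by ring⟩
    · right; left
      have e : hy r u = -1 := by simp [hy, hu]
      rw [c, d, e]
      push_cast
      refine ⟨hu, a, b, by linarith, by linarith, by ring⟩
  · right; right
    rw [a, b]
    refine ⟨hu, by push_cast; ring, ?_⟩
    rcases c with ⟨c, d⟩ | ⟨c, d⟩ <;> rw [c, d] <;> push_cast <;>
      constructor <;> nlinarith

set_option maxHeartbeats 2000000 in
theorem pos_inj_window (r ω : ℕ) (hr : 3 ≤ r) (h1 : 2 * r + 2 ≤ ω) (h2 : ω ≤ 2 * r + 3)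
    (u v : ℕ) (hu : u < ω + r) (hv : v < ω + r) (c1 : u < v + ω) (c2 : v < u + ω)
    (e1 : hx r ω u = hx r ω v) (e2 : hy r u = hy r v) : u = v := by
  simp only [hx] at e1
  simp only [hy] at e2
  split_ifs at e1 e2 <;> omega

theorem DD_planar (r ω : ℕ) (hr : 3 ≤ r) (h1 : 2 * r + 2 ≤ ω) (h2 : ω ≤ 2 * r + 3)
    (P : Set Pt) (hP : ∀ v, (DD r ω).pos v ∈ P) (i : ℕ) :
    IsPlanarDrawingOn (ω + r) (GG r ω) (window (ω + r) ω i) P (DD r ω) := by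
  have inj : InjOn (DD r ω).pos (window (ω + r) ω i) := by
    intro u hu v hv h
    simp only [DD, Prod.mk.injEq, Int.cast_inj] at h
    obtain ⟨a, b⟩ := hu
    obtain ⟨c, d⟩ := hv
    exact Fin.ext (pos_inj_window r ω hr h1 h2 u v u.2 v.2 (by omega) (by omega) h.1 h.2)
  have off : ∀ u v w : Fin (ω + r), Ed r ω u v → (DD r ω).pos w ∉ arcInterior ((DD r ω).curve u v) := by
    intro u v w h hp
    rcases int_cases r ω hr h1 u v h _ hp with ⟨-, -, -, a, b, -⟩ | ⟨-, -, -, a, b, -⟩ | ⟨-, -, a, b⟩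
    · simp only [DD] at a b
      have a' : 0 < hy r w := by exact_mod_cast a
      have b' : hy r w < 1 := by exact_mod_cast b
      omega
    · simp only [DD] at a b
      have a' : hy r w < 0 := by exact_mod_cast a
      have b' : -1 < hy r w := by exact_mod_cast b
      omega
    · simp only [DD] at a b
      have a' : le r ω u < hx r ω w := by exact_mod_cast a
      have b' : hx r ω w < le r ω u + 1 := by exact_mod_cast b
      omega
  have cross : ∀ u v x y : Fin (ω + r), Ed r ω u v → Ed r ω x y → ∀ p,
      p ∈ arcInterior ((DD r ω).curve u v) → p ∈ arcInterior ((DD r ω).curve x y) →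
      u = x ∧ v = y := by
    intro u v x y h h' p hp hp'
    rcases int_cases r ω hr h1 u v h _ hp with
      ⟨a, b, c, d, e, f⟩ | ⟨a, b, c, d, e, f⟩ | ⟨a, b, c, d⟩ <;>
    rcases int_cases r ω hr h1 x y h' _ hp' with
      ⟨a', b', c', d', e', f'⟩ | ⟨a', b', c', d', e', f'⟩ | ⟨a', b', c', d'⟩ <;>
    try (exfalso; linarith)
    · refine ⟨Fin.ext (a.trans a'.symm), Fin.ext (hx_X_inj r ω v y h1 b c b' c' ?_)⟩
      rw [f] at f'
      have := mul_left_cancel₀ (by linarith : (1 - p.2) ≠ 0) f'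
      exact_mod_cast this
    · refine ⟨Fin.ext (a.trans a'.symm), Fin.ext (hx_X_inj r ω v y h1 b c b' c' ?_)⟩
      rw [f] at f'
      have := mul_left_cancel₀ (by linarith : (1 + p.2) ≠ 0) f'
      exact_mod_cast this
    · have l1 : le r ω u < le r ω x + 1 := by
        have : (le r ω u : ℝ) < le r ω x + 1 := by linarith
        exact_mod_cast this
      have l2 : le r ω x < le r ω u + 1 := by
        have : (le r ω x : ℝ) < le r ω u + 1 := by linarith
        exact_mod_cast this
      have := le_inj r ω hr h1 u v x y v.2 y.2 a a' h h' (by omega)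
      exact ⟨Fin.ext this.1, Fin.ext this.2⟩
  refine ⟨fun v _ => hP v, inj, DD_symm r ω, ?_, ?_, ?_⟩
  · intro u hu v hv huv
    have hne : (DD r ω).pos u ≠ (DD r ω).pos v := fun h => huv.ne (inj hu hv h)
    refine ⟨?_, ?_, by simp [DD], by simp [DD]⟩
    · simp only [DD]; fun_prop
    · intro t _ t' _ h
      by_contra hcon
      apply hne
      simp only [DD, Prod.mk.injEq] at h ⊢
      have hs : t - t' ≠ 0 := sub_ne_zero.2 hcon
      constructor
      · apply mul_left_cancel₀ hs; linarith [h.1]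
      · apply mul_left_cancel₀ hs; linarith [h.2]
  · intro u _ v _ huv w _
    rcases huv with h | h
    · exact off u v w h
    · rw [← arcInterior_rev]; exact off v u w h
  · intro u _ v _ x _ y _ huv hxy hne
    rw [Set.eq_empty_iff_forall_notMem]
    rintro p ⟨hp, hp'⟩
    apply hne
    rw [Sym2.eq_iff]
    rcases huv with h | h <;> rcases hxy with h' | h'
    · exact Or.inl (cross u v x y h h' p hp hp')
    · rw [← arcInterior_rev] at hp'
      exact Or.inr (cross u v y x h h' p hp hp')
    · rw [← arcInterior_rev] at hp
      have := cross v u x y h h' p hp hp'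
      exact Or.inr ⟨this.2, this.1⟩
    · rw [← arcInterior_rev] at hp hp'
      have := cross v u y x h h' p hp hp'
      exact Or.inl ⟨this.2, this.1⟩

theorem coin_zero (r ω : ℕ) (hr : 3 ≤ r) (h1 : 2 * r + 2 ≤ ω) :
    hx r ω ω = hx r ω 0 ∧ hy r ω = hy r 0 := by
  constructor
  · simp only [hx]; split_ifs <;> omega
  · simp only [hy]; split_ifs <;> omega

theorem coin_one (r ω : ℕ) (hr : 3 ≤ r) (h1 : 2 * r + 2 ≤ ω) :
    hx r ω (ω + r - 1) = hx r ω 1 ∧ hy r (ω + r - 1) = hy r 1 := by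
  obtain ⟨m, hm⟩ : ∃ m, m = ω + r - 1 := ⟨_, rfl⟩
  rw [← hm]
  constructor
  · simp only [hx]; split_ifs <;> first | contradiction | omega
  · simp only [hy]; split_ifs <;> omega

theorem GG_upper (r ω : ℕ) (hr : 3 ≤ r) (h1 : 2 * r + 2 ≤ ω) (h2 : ω ≤ 2 * r + 3) :
    Realizable (ω + r) ω (r - 2) (GG r ω) := by
  let a0 : Fin (ω + r) := vx ω r ω (by omega)
  let a1 : Fin (ω + r) := vx ω r (ω + r - 1) (by omega)
  let y0 : Fin (ω + r) := vx ω r 0 (by omega)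
  let y1 : Fin (ω + r) := vx ω r 1 (by omega)
  let Q : Finset Pt := ((Finset.univ.erase a0).erase a1).image (DD r ω).pos
  have hQ : ∀ v, (DD r ω).pos v ∈ Q := by
    intro v
    by_cases hv0 : v = a0
    · have : (DD r ω).pos v = (DD r ω).pos y0 := by
        rw [hv0]
        simp only [DD, Prod.mk.injEq, Int.cast_inj]
        exact coin_zero r ω hr h1
      rw [this]
      refine Finset.mem_image_of_mem _ ?_
      simp only [Finset.mem_erase, Finset.mem_univ, and_true, ne_eq, Fin.ext_iff, a0, a1, y0, vx]
      omega
    by_cases hv1 : v = a1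
    · have : (DD r ω).pos v = (DD r ω).pos y1 := by
        rw [hv1]
        simp only [DD, Prod.mk.injEq, Int.cast_inj]
        exact coin_one r ω hr h1
      rw [this]
      refine Finset.mem_image_of_mem _ ?_
      simp only [Finset.mem_erase, Finset.mem_univ, and_true, ne_eq, Fin.ext_iff, a0, a1, y1, vx]
      omega
    · exact Finset.mem_image_of_mem _ (by simp [hv0, hv1])
  have cQ : Q.card ≤ ω + (r - 2) := by
    refine Finset.card_image_le.trans ?_
    rw [Finset.card_erase_of_mem, Finset.card_erase_of_mem (Finset.mem_univ _), Finset.card_univ,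
      Fintype.card_fin]
    · omega
    · simp only [Finset.mem_erase, Finset.mem_univ, and_true, ne_eq, Fin.ext_iff, a0, a1, vx]
      omega
  obtain ⟨P, hQP, hP⟩ := Infinite.exists_superset_card_eq Q _ cQ
  exact ⟨P, hP, ⟨{ Γ := fun _ => DD r ω
                   planar := fun i _ _ => DD_planar r ω hr h1 h2 _ (fun v => hQP (hQ v)) i
                   pos_eq := fun _ _ _ _ _ => rfl
                   curve_eq := fun _ _ _ _ _ _ _ _ => rfl }⟩⟩

/-- **Theorem 9.** For every `ω ≥ 8` there exists a graph story
`S = (G, ω, k, τ)` such that `G` is a series-parallel graph and `S` is not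
realizable for any `k < ⌊ω/2⌋ - 3`, while it is realizable for
`k = ⌊ω/2⌋ - 3`. -/
theorem series_parallel_extra_points_lower_bound
    (ω : ℕ) (hω : 8 ≤ ω) :
    ∃ (n : ℕ) (G : SimpleGraph (Fin n)),
      ω ≤ n ∧ Visible n ω G ∧ SeriesParallel G ∧
      (∀ k : ℕ, k < ω / 2 - 3 → ¬ Realizable n ω k G) ∧
      Realizable n ω (ω / 2 - 3) G := by
  obtain ⟨r, hr, h1, h2⟩ : ∃ r, 3 ≤ r ∧ 2 * r + 2 ≤ ω ∧ ω ≤ 2 * r + 3 :=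
    ⟨ω / 2 - 1, by omega, by omega, by omega⟩
  have hk : ω / 2 - 3 = r - 2 := by omega
  rw [hk]
  exact ⟨ω + r, GG r ω, by omega, GG_visible r ω hr h1, GG_sp r ω h1,
    fun k hk => GG_lower r ω k hr h1 hk, GG_upper r ω hr h1 h2⟩

end GraphStories
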